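/- arXiv:2009.06465 — 7 statements merged into one kernel-verified Lean document; each statement's English description precedes it below -/
import Mathlib

section
/- Let n ≥ 2 and let G be a proper subdomain of ℝⁿ (a nonempty open connected set with nonempty boundary). Then for all x, y ∈ G one has j_G(x,y) ≤ 2·ĵ_G(x,y), where j_G is the Euclidean distance-ratio metric and ĵ_G is the chordal distance-ratio metric of G. -/
/-!
Write `d = d_G(x) ≤ d_G(y)` (by symmetry), pick `a ∈ ∂G` with `|x - a| = d`, and set
`t = |x - y|`, `A = σ(a)`, `r = q(x,y) / min(d̂(x), d̂(y))`. The claim is `1 + t/d ≤ (1 + r)²`.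

Two lower bounds for `r` are combined. From `d̂(x) ≤ q(x,a)` one gets `r ≥ tA/(dσ(y))`. Moreover
`d̂(y) ≤ q(y,∞) = 1/σ(y)` holds even if `G` is bounded, because the ray from `y` pointing away
from the origin leaves `G` at some `b` with `|y - b| ≤ σ(b)`, whence `q(y,b) ≤ 1/σ(y)`; this gives
`r ≥ t/σ(x)`. As `σ` is 1-Lipschitz, `σ(x) ≤ A + d` and `σ(y) ≤ A + d + t`. An expansion of
`(1 + r)²` shows that the first bound suffices if `A² ≥ d(d + t)` and the second one if
`A² ≤ d(d + t)`.
-/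

open Metric Bornology
open scoped Classical

/-- `σ(x) = √(1 + |x|²)`. -/
noncomputable def sigmaFn {n : ℕ} (x : EuclideanSpace ℝ (Fin n)) : ℝ :=
  Real.sqrt (1 + ‖x‖ ^ 2)

/-- The chordal (spherical) distance between two finite points of the Möbius space
`S̄ⁿ = ℝⁿ ∪ {∞}`: `q(x,y) = |x−y|/(σ(x)σ(y))`. Recall `q(x,∞) = 1/σ(x)`. -/
noncomputable def chordal {n : ℕ} (x y : EuclideanSpace ℝ (Fin n)) : ℝ :=
  ‖x - y‖ / (sigmaFn x * sigmaFn y)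

/-- The Euclidean distance-ratio metric
`j_G(x,y) = log(1 + |x−y| / min(d_G(x), d_G(y)))`, where `d_G` is the Euclidean
distance to the boundary of `G`. -/
noncomputable def jDist {n : ℕ} (G : Set (EuclideanSpace ℝ (Fin n)))
    (x y : EuclideanSpace ℝ (Fin n)) : ℝ :=
  Real.log (1 + ‖x - y‖ /
    min (Metric.infDist x (frontier G)) (Metric.infDist y (frontier G)))

/-- The chordal distance to the boundary of `G` taken in the Möbius space
`S̄ⁿ = ℝⁿ ∪ {∞}`: the boundary of `G` in `S̄ⁿ` is the Euclidean boundary together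
with `∞` when `G` is unbounded, and `q(x,∞) = 1/σ(x)`. -/
noncomputable def chordalBdryDist {n : ℕ} (G : Set (EuclideanSpace ℝ (Fin n)))
    (x : EuclideanSpace ℝ (Fin n)) : ℝ :=
  if IsBounded G then ⨅ a : frontier G, chordal x (a : EuclideanSpace ℝ (Fin n))
  else min (⨅ a : frontier G, chordal x (a : EuclideanSpace ℝ (Fin n))) (1 / sigmaFn x)

/-- The chordal distance-ratio metric
`ĵ_G(x,y) = log(1 + q(x,y) / min(d̂_G(x), d̂_G(y)))`. -/
noncomputable def jChordal {n : ℕ} (G : Set (EuclideanSpace ℝ (Fin n)))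
    (x y : EuclideanSpace ℝ (Fin n)) : ℝ :=
  Real.log (1 + chordal x y / min (chordalBdryDist G x) (chordalBdryDist G y))

lemma sigmaFn_pos {n : ℕ} (x : EuclideanSpace ℝ (Fin n)) : 0 < sigmaFn x :=
  Real.sqrt_pos.2 (by positivity)

lemma sigmaFn_sq {n : ℕ} (x : EuclideanSpace ℝ (Fin n)) : sigmaFn x ^ 2 = 1 + ‖x‖ ^ 2 :=
  Real.sq_sqrt (by positivity)

lemma sigmaFn_le_add {n : ℕ} (x y : EuclideanSpace ℝ (Fin n)) :
    sigmaFn x ≤ sigmaFn y + ‖x - y‖ := by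
  have hy := sigmaFn_pos y
  have hle : ‖y‖ ≤ sigmaFn y := Real.le_sqrt_of_sq_le (by linarith)
  have htri : ‖x‖ ≤ ‖y‖ + ‖x - y‖ := by
    simpa using norm_add_le y (x - y)
  refine Real.sqrt_le_iff.2 ⟨by positivity, ?_⟩
  have h1 : ‖x‖ ^ 2 ≤ (‖y‖ + ‖x - y‖) ^ 2 := pow_le_pow_left₀ (norm_nonneg _) htri 2
  nlinarith [sigmaFn_sq y, mul_le_mul_of_nonneg_right hle (norm_nonneg (x - y))]

lemma chordal_nonneg {n : ℕ} (x y : EuclideanSpace ℝ (Fin n)) : 0 ≤ chordal x y :=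
  div_nonneg (norm_nonneg _) (mul_pos (sigmaFn_pos x) (sigmaFn_pos y)).le

lemma chordal_comm {n : ℕ} (x y : EuclideanSpace ℝ (Fin n)) : chordal x y = chordal y x := by
  rw [chordal, chordal, norm_sub_rev, mul_comm]

lemma bddBelow_chordal {n : ℕ} (G : Set (EuclideanSpace ℝ (Fin n)))
    (x : EuclideanSpace ℝ (Fin n)) :
    BddBelow (Set.range fun a : frontier G => chordal x (a : EuclideanSpace ℝ (Fin n))) :=
  ⟨0, by rintro _ ⟨a, rfl⟩; exact chordal_nonneg _ _⟩

lemma chordalBdryDist_le_chordal {n : ℕ} {G : Set (EuclideanSpace ℝ (Fin n))}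
    (x : EuclideanSpace ℝ (Fin n)) {a : EuclideanSpace ℝ (Fin n)} (ha : a ∈ frontier G) :
    chordalBdryDist G x ≤ chordal x a := by
  have h := ciInf_le (bddBelow_chordal G x) ⟨a, ha⟩
  unfold chordalBdryDist
  split_ifs
  · exact h
  · exact (min_le_left _ _).trans h

lemma inter_frontier_nonempty {X : Type*} [TopologicalSpace X] {s t : Set X}
    (hs : IsPreconnected s) (h1 : (s ∩ t).Nonempty) (h2 : (s ∩ tᶜ).Nonempty) :
    (s ∩ frontier t).Nonempty := by
  by_contra h
  have hsub : s ⊆ interior t ∪ interior tᶜ := by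
    rw [← compl_frontier_eq_union_interior]
    exact fun z hz hzt => h ⟨z, hz, hzt⟩
  obtain ⟨p, hp, hpt⟩ := h1
  obtain ⟨q, hq, hqt⟩ := h2
  obtain ⟨z, -, hz1, hz2⟩ := hs _ _ isOpen_interior isOpen_interior hsub
    ⟨p, hp, (hsub hp).resolve_right fun h => interior_subset h hpt⟩
    ⟨q, hq, (hsub hq).resolve_left fun h => hqt (interior_subset h)⟩
  exact interior_subset hz2 (interior_subset hz1)

/-- The ray from `x` in a direction `u` with `⟪x, u⟫ ≥ 0` leaves a bounded set at a frontier point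
that is chordally no farther from `x` than `∞` is. -/
lemma exists_frontier_chordal_le {n : ℕ} (hn : 2 ≤ n) {G : Set (EuclideanSpace ℝ (Fin n))}
    (hG : IsBounded G) {x : EuclideanSpace ℝ (Fin n)} (hx : x ∈ G) :
    ∃ b ∈ frontier G, chordal x b ≤ 1 / sigmaFn x := by
  obtain ⟨u, hu, hxu⟩ : ∃ u : EuclideanSpace ℝ (Fin n), u ≠ 0 ∧ 0 ≤ inner ℝ x u := by
    by_cases h0 : x = 0
    · have : Nonempty (Fin n) := ⟨⟨0, by omega⟩⟩
      obtain ⟨u, hu⟩ := exists_ne (0 : EuclideanSpace ℝ (Fin n))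
      exact ⟨u, hu, by simp [h0]⟩
    · exact ⟨x, h0, real_inner_self_nonneg⟩
  have hupos : 0 < ‖u‖ := norm_pos_iff.2 hu
  have hsq (s : ℝ) (hs : 0 ≤ s) : ‖x‖ ^ 2 + (s * ‖u‖) ^ 2 ≤ ‖x + s • u‖ ^ 2 := by
    rw [norm_add_sq_real, norm_smul, inner_smul_right, Real.norm_of_nonneg hs]
    nlinarith [mul_nonneg hs hxu]
  have hpre : IsPreconnected ((fun s : ℝ => x + s • u) '' Set.Ici 0) :=
    isPreconnected_Ici.image _ (by fun_prop)
  obtain ⟨R, hR⟩ := hG.exists_norm_le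
  have hR0 : 0 ≤ R := (norm_nonneg x).trans (hR x hx)
  obtain ⟨_, ⟨s, hs, rfl⟩, hb⟩ := inter_frontier_nonempty hpre (t := G)
    ⟨x, ⟨0, Set.mem_Ici.2 le_rfl, by simp⟩, hx⟩
    ⟨x + ((R + 1) / ‖u‖) • u, ⟨_, Set.mem_Ici.2 (by positivity), rfl⟩, fun hmem => by
      have h1 := hsq ((R + 1) / ‖u‖) (by positivity)
      rw [div_mul_cancel₀ _ hupos.ne'] at h1
      have h2 := pow_le_pow_left₀ (norm_nonneg _) (hR _ hmem) 2
      nlinarith [sq_nonneg ‖x‖]⟩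
  have hs0 : 0 ≤ s := hs
  refine ⟨_, hb, ?_⟩
  have hle : ‖x - (x + s • u)‖ ≤ sigmaFn (x + s • u) := by
    have : ‖x - (x + s • u)‖ = s * ‖u‖ := by
      rw [sub_add_cancel_left, norm_neg, norm_smul, Real.norm_of_nonneg hs0]
    rw [this]
    exact Real.le_sqrt_of_sq_le (by nlinarith [hsq s hs0, sq_nonneg ‖x‖])
  have h1 := sigmaFn_pos x
  have h2 := sigmaFn_pos (x + s • u)
  rw [chordal, div_le_div_iff₀ (by positivity) h1]
  nlinarith

lemma chordalBdryDist_le_inv {n : ℕ} (hn : 2 ≤ n) {G : Set (EuclideanSpace ℝ (Fin n))}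
    {x : EuclideanSpace ℝ (Fin n)} (hx : x ∈ G) :
    chordalBdryDist G x ≤ 1 / sigmaFn x := by
  by_cases hG : IsBounded G
  · obtain ⟨b, hb, hle⟩ := exists_frontier_chordal_le hn hG hx
    exact (chordalBdryDist_le_chordal x hb).trans hle
  · rw [chordalBdryDist, if_neg hG]
    exact min_le_right _ _

/-- Points at Euclidean distance at least `δ` from `x` are at chordal distance at least
`δ / (σ(x)(σ(x) + δ))`, so the chordal boundary distance is positive along with the Euclidean
one. -/
lemma chordalBdryDist_pos {n : ℕ} {G : Set (EuclideanSpace ℝ (Fin n))}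
    (hGbd : (frontier G).Nonempty) {x : EuclideanSpace ℝ (Fin n)}
    (hd : 0 < infDist x (frontier G)) : 0 < chordalBdryDist G x := by
  have hσ := sigmaFn_pos x
  have hinf : 0 < ⨅ a : frontier G, chordal x (a : EuclideanSpace ℝ (Fin n)) := by
    have : Nonempty (frontier G) := hGbd.to_subtype
    set δ := infDist x (frontier G)
    refine lt_of_lt_of_le (b := δ / (sigmaFn x * (sigmaFn x + δ))) (by positivity)
      (le_ciInf fun a => ?_)
    have h1 : δ ≤ ‖x - a‖ := by
      rw [← dist_eq_norm]; exact infDist_le_dist_of_mem a.2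
    have h2 : sigmaFn (a : EuclideanSpace ℝ (Fin n)) ≤ sigmaFn x + ‖x - a‖ := by
      rw [norm_sub_rev]; exact sigmaFn_le_add _ _
    have h3 := sigmaFn_pos (a : EuclideanSpace ℝ (Fin n))
    rw [chordal, div_le_div_iff₀ (by positivity) (by positivity)]
    have h4 : δ * sigmaFn (a : EuclideanSpace ℝ (Fin n)) ≤ ‖x - a‖ * (sigmaFn x + δ) := by
      nlinarith [mul_le_mul_of_nonneg_left h2 hd.le]
    nlinarith [mul_le_mul_of_nonneg_left h4 hσ.le]
  unfold chordalBdryDist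
  split_ifs
  · exact hinf
  · exact lt_min hinf (by positivity)

/-- The real inequality behind the theorem, with `A = σ(a)`, `X = σ(x)`, `Y = σ(y)`. -/
lemma one_add_div_le_sq {d t A X Y r : ℝ} (hd : 0 < d) (ht : 0 ≤ t) (hA : 0 < A)
    (hX : 0 < X) (hY : 0 < Y) (hXA : X ≤ A + d) (hYA : Y ≤ A + d + t)
    (h1 : t * A / (d * Y) ≤ r) (h2 : t / X ≤ r) : 1 + t / d ≤ (1 + r) ^ 2 := by
  rcases le_total (d * (d + t)) (A ^ 2) with h | h
  · have hr : t * A / (d * (A + d + t)) ≤ r :=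
      le_trans (by gcongr) h1
    refine le_trans ?_ (pow_le_pow_left₀ (by positivity) (add_le_add_right hr 1) 2)
    -- The difference of the two sides is a nonnegative multiple of `A² - d(d + t)`.
    have key : (1 + t * A / (d * (A + d + t))) ^ 2 - (1 + t / d) =
        t * (d + t) * (A ^ 2 - d * (d + t)) / (d * (A + d + t)) ^ 2 := by
      field_simp
      ring
    have : 0 ≤ t * (d + t) * (A ^ 2 - d * (d + t)) / (d * (A + d + t)) ^ 2 :=
      div_nonneg (mul_nonneg (by positivity) (by linarith)) (by positivity)
    linarith
  · have hr : t / (A + d) ≤ r := le_trans (by gcongr) h2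
    refine le_trans ?_ (pow_le_pow_left₀ (by positivity) (add_le_add_right hr 1) 2)
    have key : (1 + t / (A + d)) ^ 2 - (1 + t / d) =
        t * (d * (d + t) - A ^ 2) / (d * (A + d) ^ 2) := by
      field_simp
      ring
    have : 0 ≤ t * (d * (d + t) - A ^ 2) / (d * (A + d) ^ 2) :=
      div_nonneg (mul_nonneg ht (by linarith)) (by positivity)
    linarith

lemma jDist_comm {n : ℕ} (G : Set (EuclideanSpace ℝ (Fin n)))
    (x y : EuclideanSpace ℝ (Fin n)) : jDist G x y = jDist G y x := by
  rw [jDist, jDist, norm_sub_rev, min_comm]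

lemma jChordal_comm {n : ℕ} (G : Set (EuclideanSpace ℝ (Fin n)))
    (x y : EuclideanSpace ℝ (Fin n)) : jChordal G x y = jChordal G y x := by
  rw [jChordal, jChordal, chordal_comm, min_comm]

lemma infDist_frontier_pos {n : ℕ} {G : Set (EuclideanSpace ℝ (Fin n))} (hGopen : IsOpen G)
    (hGbd : (frontier G).Nonempty) {x : EuclideanSpace ℝ (Fin n)} (hx : x ∈ G) :
    0 < infDist x (frontier G) := by
  refine (isClosed_frontier.notMem_iff_infDist_pos hGbd).1 fun h => ?_
  rw [hGopen.frontier_eq] at h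
  exact h.2 hx

lemma j_le_two_jhat_of_le {n : ℕ} (hn : 2 ≤ n) {G : Set (EuclideanSpace ℝ (Fin n))}
    (hGopen : IsOpen G) (hGbd : (frontier G).Nonempty)
    {x y : EuclideanSpace ℝ (Fin n)} (hx : x ∈ G) (hy : y ∈ G)
    (hxy : infDist x (frontier G) ≤ infDist y (frontier G)) :
    jDist G x y ≤ 2 * jChordal G x y := by
  have hdx := infDist_frontier_pos hGopen hGbd hx
  have hdy := infDist_frontier_pos hGopen hGbd hy
  obtain ⟨a, ha, hda⟩ := isClosed_frontier.exists_infDist_eq_dist hGbd x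
  rw [dist_eq_norm] at hda
  have hm : 0 < min (chordalBdryDist G x) (chordalBdryDist G y) :=
    lt_min (chordalBdryDist_pos hGbd hdx) (chordalBdryDist_pos hGbd hdy)
  have hX := sigmaFn_pos x
  have hY := sigmaFn_pos y
  have hA := sigmaFn_pos a
  have hXA : sigmaFn x ≤ sigmaFn a + ‖x - a‖ := sigmaFn_le_add x a
  have hYX : sigmaFn y ≤ sigmaFn x + ‖x - y‖ := by
    rw [norm_sub_rev]; exact sigmaFn_le_add y x
  rw [hda] at hdx
  have h1 : ‖x - y‖ * sigmaFn a / (‖x - a‖ * sigmaFn y) ≤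
      chordal x y / min (chordalBdryDist G x) (chordalBdryDist G y) := by
    have e : ‖x - y‖ * sigmaFn a / (‖x - a‖ * sigmaFn y) = chordal x y / chordal x a := by
      unfold chordal
      field_simp
    rw [e]
    exact div_le_div_of_nonneg_left (chordal_nonneg x y) hm
      ((min_le_left _ _).trans (chordalBdryDist_le_chordal x ha))
  have h2 : ‖x - y‖ / sigmaFn x ≤
      chordal x y / min (chordalBdryDist G x) (chordalBdryDist G y) := by
    have e : ‖x - y‖ / sigmaFn x = chordal x y / (1 / sigmaFn y) := by
      unfold chordal
      field_simp
    rw [e]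
    exact div_le_div_of_nonneg_left (chordal_nonneg x y) hm
      ((min_le_right _ _).trans (chordalBdryDist_le_inv hn hy))
  have key := one_add_div_le_sq hdx (norm_nonneg (x - y)) hA hX hY hXA
    (by linarith) h1 h2
  rw [jDist, jChordal, min_eq_left hxy, hda]
  calc Real.log (1 + ‖x - y‖ / ‖x - a‖)
      ≤ Real.log ((1 + chordal x y / min (chordalBdryDist G x) (chordalBdryDist G y)) ^ 2) :=
        Real.log_le_log (by positivity) key
    _ = _ := by rw [Real.log_pow]; norm_num

/-- For a proper subdomain `G` of `ℝⁿ` (`n ≥ 2`) and all `x, y ∈ G`, one has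
`j_G(x,y) ≤ 2·ĵ_G(x,y)`. -/
theorem j_le_two_jhat {n : ℕ} (hn : 2 ≤ n) (G : Set (EuclideanSpace ℝ (Fin n)))
    (hGopen : IsOpen G) (hGconn : IsConnected G) (hGbd : (frontier G).Nonempty)
    (x y : EuclideanSpace ℝ (Fin n)) (hx : x ∈ G) (hy : y ∈ G) :
    jDist G x y ≤ 2 * jChordal G x y := by
  rcases le_total (infDist x (frontier G)) (infDist y (frontier G)) with h | h
  · exact j_le_two_jhat_of_le hn hGopen hGbd hx hy h
  · rw [jDist_comm, jChordal_comm]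
    exact j_le_two_jhat_of_le hn hGopen hGbd hy hx h
end

section
/- Let n ≥ 2 and G₀ = ℝⁿ \ {0}, whose boundary in the Möbius space S̄ⁿ = ℝⁿ ∪ {∞} is {0, ∞}, so that d̂_{G₀}(x) = min(q(x,0), 1/σ(x)) and ĵ_{G₀}(x,y) = log(1 + q(x,y)/min(d̂_{G₀}(x), d̂_{G₀}(y))), while j_{G₀}(x,y) = log(1 + |x−y|/min(|x|,|y|)). Then the constant 2 in the inequality j_{G₀} ≤ 2·ĵ_{G₀} is optimal: for every c < 2 there exist distinct x, y ∈ ℝⁿ \ {0} with j_{G₀}(x,y) > c·ĵ_{G₀}(x,y). (One may take x = e₁/r and y = r·e₁ for a sufficiently large r > 1, where e₁ is a unit vector.) -/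
/-- The chordal quotient occurring in `ĵ(e/r, re)` lies in `[0, r]`. -/
lemma chordal_quotient_mem {n : ℕ} (e : EuclideanSpace ℝ (Fin n)) (he : ‖e‖ = 1) (r : ℝ)
    (hr : 1 < r) :
    chordal (r⁻¹ • e) (r • e) /
      min (min (chordal (r⁻¹ • e) 0) (1 / sigmaFn (r⁻¹ • e)))
        (min (chordal (r • e) 0) (1 / sigmaFn (r • e))) ∈ Set.Icc 0 r := by
  have r0 : 0 < r := by linarith
  have hri : r⁻¹ < 1 := inv_lt_one_of_one_lt₀ hr
  set s := Real.sqrt (1 + r ^ 2) with hs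
  have s0 : 0 < s := by positivity
  have s2 : s ^ 2 = 1 + r ^ 2 := Real.sq_sqrt (by positivity)
  have hx : ‖r⁻¹ • e‖ = r⁻¹ := by rw [norm_smul, he, mul_one, Real.norm_of_nonneg (by positivity)]
  have hy : ‖r • e‖ = r := by rw [norm_smul, he, mul_one, Real.norm_of_nonneg r0.le]
  have hd : ‖r⁻¹ • e - r • e‖ = r - r⁻¹ := by
    rw [← sub_smul, norm_smul, he, mul_one, Real.norm_eq_abs, abs_sub_comm,
      abs_of_pos (by linarith)]
  have sx : sigmaFn (r⁻¹ • e) = s / r := by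
    rw [sigmaFn, hx, Real.sqrt_eq_iff_mul_self_eq (by positivity) (by positivity)]
    field_simp
    linarith
  have sy : sigmaFn (r • e) = s := by rw [sigmaFn, hy]
  have sz : sigmaFn (0 : EuclideanSpace ℝ (Fin n)) = 1 := by simp [sigmaFn]
  have hq : chordal (r⁻¹ • e) (r • e) = (r ^ 2 - 1) / s ^ 2 := by
    rw [chordal, hd, sx, sy]
    field_simp
  have hx0 : chordal (r⁻¹ • e) 0 = 1 / s := by
    rw [chordal, sub_zero, hx, sx, sz]
    field_simp
  have hy0 : chordal (r • e) 0 = r / s := by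
    rw [chordal, sub_zero, hy, sy, sz, mul_one]
  have hle : 1 / s ≤ r / s := by gcongr
  have hxi : 1 / (s / r) = r / s := by rw [one_div_div]
  rw [hq, hx0, hy0, sx, sy, hxi, min_eq_left hle, min_eq_right hle, min_self]
  have heq : (r ^ 2 - 1) / s ^ 2 / (1 / s) = (r ^ 2 - 1) / s := by field_simp
  have hrs : r ≤ s := Real.le_sqrt_of_sq_le (by linarith)
  rw [heq]
  refine ⟨div_nonneg (by nlinarith) s0.le, ?_⟩
  rw [div_le_iff₀ s0]
  nlinarith

/-- For `G₀ = ℝⁿ \ {0}`, whose boundary in `S̄ⁿ` is `{0, ∞}`, the constant `2` in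
`j_{G₀} ≤ 2·ĵ_{G₀}` is optimal: for every `c < 2` there are distinct
`x, y ∈ ℝⁿ \ {0}` with `j_{G₀}(x,y) > c·ĵ_{G₀}(x,y)`. -/
theorem two_optimal {n : ℕ} (hn : 2 ≤ n) (c : ℝ) (hc : c < 2) :
    ∃ x y : EuclideanSpace ℝ (Fin n), x ≠ 0 ∧ y ≠ 0 ∧ x ≠ y ∧
      Real.log (1 + ‖x - y‖ / min ‖x‖ ‖y‖) >
        c * Real.log (1 + chordal x y /
          min (min (chordal x 0) (1 / sigmaFn x))
              (min (chordal y 0) (1 / sigmaFn y))) := by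
  obtain ⟨e, he⟩ : ∃ e : EuclideanSpace ℝ (Fin n), ‖e‖ = 1 :=
    ⟨EuclideanSpace.single ⟨0, by omega⟩ 1, by simp⟩
  have e0 : e ≠ 0 := by
    rintro rfl
    simp at he
  have hc' : 0 < 2 - c := by linarith
  -- `log r = t` is chosen so that `(2 - c) * t = (2 - c) + 2 > c * log 2`.
  obtain ⟨t, ht⟩ : ∃ t : ℝ, t = 1 + 2 / (2 - c) := ⟨_, rfl⟩
  have t0 : 0 < t := by rw [ht]; positivity
  have htc : t * (2 - c) = (2 - c) + 2 := by rw [ht]; field_simp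
  obtain ⟨r, hrt⟩ : ∃ r : ℝ, r = Real.exp t := ⟨_, rfl⟩
  have hr : 1 < r := by rw [hrt]; exact Real.one_lt_exp_iff.mpr t0
  have r0 : 0 < r := by linarith
  have hlog : Real.log r = t := by rw [hrt, Real.log_exp]
  have hri : r⁻¹ < 1 := inv_lt_one_of_one_lt₀ hr
  have hx : ‖r⁻¹ • e‖ = r⁻¹ := by rw [norm_smul, he, mul_one, Real.norm_of_nonneg (by positivity)]
  have hy : ‖r • e‖ = r := by rw [norm_smul, he, mul_one, Real.norm_of_nonneg r0.le]
  have hd : ‖r⁻¹ • e - r • e‖ = r - r⁻¹ := by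
    rw [← sub_smul, norm_smul, he, mul_one, Real.norm_eq_abs, abs_sub_comm,
      abs_of_pos (by linarith)]
  refine ⟨r⁻¹ • e, r • e, smul_ne_zero (by positivity) e0, smul_ne_zero r0.ne' e0, ?_, ?_⟩
  · intro h
    rw [h] at hx
    linarith
  obtain ⟨hQ0, hQr⟩ := chordal_quotient_mem e he r hr
  generalize chordal (r⁻¹ • e) (r • e) /
      min (min (chordal (r⁻¹ • e) 0) (1 / sigmaFn (r⁻¹ • e)))
        (min (chordal (r • e) 0) (1 / sigmaFn (r • e))) = Q at hQ0 hQr ⊢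
  have hj : Real.log (1 + ‖r⁻¹ • e - r • e‖ / min ‖r⁻¹ • e‖ ‖r • e‖) = 2 * t := by
    rw [hd, hx, hy, min_eq_left (by linarith)]
    have : 1 + (r - r⁻¹) / r⁻¹ = r ^ 2 := by
      field_simp
      ring
    rw [this, Real.log_pow, hlog]
    norm_num
  rw [hj, gt_iff_lt]
  have hL0 : 0 ≤ Real.log (1 + Q) := Real.log_nonneg (by linarith)
  have hL : Real.log (1 + Q) ≤ Real.log 2 + t := by
    rw [← hlog, ← Real.log_mul two_ne_zero r0.ne']
    exact Real.log_le_log (by linarith) (by linarith)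
  have hl2 : Real.log 2 < 1 := by linarith [Real.log_two_lt_d9]
  rcases le_total c 0 with h | h
  · nlinarith [mul_nonneg (neg_nonneg.mpr h) hL0]
  · nlinarith [mul_le_mul_of_nonneg_left hL h, mul_le_mul_of_nonneg_left hl2.le h]
end

section
/- For every real x > 0 one has μ(tanh x) < π²/(4x), i.e. (π/2)·K(√(1 − tanh²x))/K(tanh x) < π²/(4x). -/
/-!
Write `r = tanh x` and `r' = √(1 - r²)`. The claim is `2 x K(r') < π K(r)`, and both sides are
compared with `π x / r`.

* Since `1 - r'² sin² t ≥ 1 - r'² = r²`, the integrand of `K(r')` is at most `1 / r`, so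
  `K(r') ≤ π / (2 r)` (`ellK_compl_le`).
* Since `sin t ≤ 1`, with strict inequality at `t = 0`, `K(r)` exceeds
  `∫₀^{π/2} sin t / √(1 - r² sin² t) dt`, which equals `artanh r / r = x / r`
  (`integral_sin_div`, `div_tanh_lt_ellK`).
-/

open Real MeasureTheory

/-- The complete elliptic integral of the first kind
`K(r) = ∫₀^{π/2} dt / √(1 − r² sin² t)`. -/
noncomputable def ellK (r : ℝ) : ℝ :=
  ∫ t in (0:ℝ)..(Real.pi / 2), 1 / Real.sqrt (1 - r ^ 2 * Real.sin t ^ 2)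

/-- The modulus of the plane Grötzsch ring, `μ(r) = (π/2)·K(√(1−r²))/K(r)`. -/
noncomputable def muGrotzsch (r : ℝ) : ℝ :=
  (Real.pi / 2) * ellK (Real.sqrt (1 - r ^ 2)) / ellK r

lemma tanh_sq_lt_one' (x : ℝ) : Real.tanh x ^ 2 < 1 := by
  rw [sq_lt_one_iff_abs_lt_one, abs_lt]
  exact ⟨Real.neg_one_lt_tanh x, Real.tanh_lt_one x⟩

lemma radicand_pos (x t : ℝ) : 0 < 1 - Real.tanh x ^ 2 * Real.sin t ^ 2 := by
  nlinarith [tanh_sq_lt_one' x, Real.sin_sq_le_one t, sq_nonneg (Real.tanh x),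
    sq_nonneg (Real.sin t)]

lemma ellK_compl_le (r : ℝ) (h0 : 0 < r) (h1 : r < 1) :
    ellK (Real.sqrt (1 - r ^ 2)) ≤ Real.pi / 2 * (1 / r) := by
  have hsq : Real.sqrt (1 - r ^ 2) ^ 2 = 1 - r ^ 2 := Real.sq_sqrt (by nlinarith)
  have hrad : ∀ t : ℝ, r ^ 2 ≤ 1 - Real.sqrt (1 - r ^ 2) ^ 2 * Real.sin t ^ 2 := by
    intro t
    rw [hsq]
    nlinarith [Real.sin_sq_le_one t]
  have hle : ∀ t : ℝ, r ≤ Real.sqrt (1 - Real.sqrt (1 - r ^ 2) ^ 2 * Real.sin t ^ 2) :=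
    fun t => Real.le_sqrt_of_sq_le (hrad t)
  have hpi := Real.pi_pos
  have hcont : Continuous fun t : ℝ =>
      1 / Real.sqrt (1 - Real.sqrt (1 - r ^ 2) ^ 2 * Real.sin t ^ 2) :=
    continuous_const.div (by fun_prop) fun t => (h0.trans_le (hle t)).ne'
  calc ellK (Real.sqrt (1 - r ^ 2)) ≤ ∫ _ in (0:ℝ)..(Real.pi / 2), 1 / r :=
        intervalIntegral.integral_mono_on (by positivity) (hcont.intervalIntegrable _ _)
          intervalIntegrable_const fun t _ => one_div_le_one_div_of_le h0 (hle t)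
    _ = Real.pi / 2 * (1 / r) := by simp

/-- An antiderivative of the integrand is `-arsinh (sinh x · cos t) / tanh x`. -/
lemma integral_sin_div (x : ℝ) (hx : 0 < x) :
    ∫ t in (0:ℝ)..(Real.pi / 2), Real.sin t / Real.sqrt (1 - Real.tanh x ^ 2 * Real.sin t ^ 2)
      = x / Real.tanh x := by
  have hs : 0 < Real.sinh x := Real.sinh_pos_iff.2 hx
  have hc : 0 < Real.cosh x := Real.cosh_pos x
  have hcont : Continuous fun t : ℝ =>
      Real.sin t / Real.sqrt (1 - Real.tanh x ^ 2 * Real.sin t ^ 2) :=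
    Real.continuous_sin.div (by fun_prop) fun t => (Real.sqrt_pos.2 (radicand_pos x t)).ne'
  have hderiv : ∀ t : ℝ, HasDerivAt
      (fun t => -(Real.arsinh (Real.sinh x * Real.cos t) / Real.tanh x))
      (Real.sin t / Real.sqrt (1 - Real.tanh x ^ 2 * Real.sin t ^ 2)) t := by
    intro t
    have h := ((((Real.hasDerivAt_cos t).const_mul (Real.sinh x)).arsinh).div_const
      (Real.tanh x)).neg
    -- The two radicands agree up to the factor `cosh² x`.
    have hrad : Real.sqrt (1 + (Real.sinh x * Real.cos t) ^ 2)
        = Real.cosh x * Real.sqrt (1 - Real.tanh x ^ 2 * Real.sin t ^ 2) := by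
      have : 1 + (Real.sinh x * Real.cos t) ^ 2
          = Real.cosh x ^ 2 * (1 - Real.tanh x ^ 2 * Real.sin t ^ 2) := by
        rw [Real.tanh_eq_sinh_div_cosh]
        field_simp
        rw [Real.cosh_sq, Real.cos_sq']
        ring
      rw [this, Real.sqrt_mul (sq_nonneg _), Real.sqrt_sq hc.le]
    have hpos := Real.sqrt_pos.2 (radicand_pos x t)
    refine h.congr_deriv ?_
    rw [hrad]
    set q := Real.sqrt (1 - Real.tanh x ^ 2 * Real.sin t ^ 2)
    rw [Real.tanh_eq_sinh_div_cosh, smul_eq_mul]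
    field_simp
  rw [intervalIntegral.integral_eq_sub_of_hasDerivAt (fun t _ => hderiv t)
    (hcont.intervalIntegrable _ _)]
  simp

lemma div_tanh_lt_ellK (x : ℝ) (hx : 0 < x) : x / Real.tanh x < ellK (Real.tanh x) := by
  have hpi := Real.pi_pos
  have hpos : ∀ t : ℝ, 0 < Real.sqrt (1 - Real.tanh x ^ 2 * Real.sin t ^ 2) :=
    fun t => Real.sqrt_pos.2 (radicand_pos x t)
  rw [← integral_sin_div x hx]
  apply intervalIntegral.integral_lt_integral_of_continuousOn_of_le_of_exists_lt (by positivity)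
  · exact (Real.continuous_sin.div (by fun_prop) fun t => (hpos t).ne').continuousOn
  · exact (continuous_const.div (by fun_prop) fun t => (hpos t).ne').continuousOn
  · exact fun t _ => div_le_div_of_nonneg_right (Real.sin_le_one t) (hpos t).le
  · exact ⟨0, ⟨le_rfl, by positivity⟩, by simp⟩

/-- For every `x > 0` one has `μ(tanh x) < π²/(4x)`. -/
theorem mu_tanh_lt (x : ℝ) (hx : 0 < x) :
    muGrotzsch (Real.tanh x) < Real.pi ^ 2 / (4 * x) := by
  have hr : 0 < Real.tanh x := by
    rw [Real.tanh_eq_sinh_div_cosh]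
    exact div_pos (Real.sinh_pos_iff.2 hx) (Real.cosh_pos x)
  have hK := div_tanh_lt_ellK x hx
  have hK' := ellK_compl_le (Real.tanh x) hr (Real.tanh_lt_one x)
  have hpi := Real.pi_pos
  have hKpos : 0 < ellK (Real.tanh x) := (div_pos hx hr).trans hK
  unfold muGrotzsch
  rw [div_lt_div_iff₀ hKpos (by positivity)]
  calc Real.pi / 2 * ellK (Real.sqrt (1 - Real.tanh x ^ 2)) * (4 * x)
      ≤ Real.pi / 2 * (Real.pi / 2 * (1 / Real.tanh x)) * (4 * x) := by gcongr
    _ = Real.pi ^ 2 * (x / Real.tanh x) := by ring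
    _ < Real.pi ^ 2 * ellK (Real.tanh x) := by gcongr
end

section
/- For all real numbers s ≥ 1, τ ≥ 1 and φ ∈ [0,1], one has 2φ/(sτ) + log s ≤ M₀·log(1 + log(1 + √((e^{(s−1)τ} − 1)² + 4φ²·e^{(s−1)τ}))), where M₀ = 2/log(1 + log 3). Equality holds at s = τ = φ = 1. -/
/-!
Only `τ = 1` matters: the left side decreases in `τ`, while the right side increases because
`x ↦ (x - 1)² + 4φ²x` is increasing on `x ≥ 1`. Put `t = s - 1` and `x = exp t`. The radicand is
`(1 - φ²)(x - 1)² + φ²(x + 1)²`, so the square root is at least both `x - 1` and `φ(x + 1)`; the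
two bounds agree at `φ₀ = (x - 1)/(x + 1) = tanh(t/2)`.

* For `φ ≤ φ₀`, the bound `x - 1` turns the right side into `M₀ log s`, and
  `2φ₀ ≤ t` together with `t/(1 + t) ≤ log(1 + t)` gives the claim (`endpoint_left`).
* For `φ₀ ≤ φ ≤ 1`, the bound `φ(x + 1)` makes the right side concave in `φ`, whereas the left side
  is affine. So it suffices to treat `φ = φ₀`, already done, and `φ = 1`, which is the one-variable
  inequality `endpoint_right`.

The only numerical fact needed is `M₀ ≥ 5/2`.
-/

open Real

lemma log_one_add_log_three_pos : 0 < log (1 + log 3) :=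
  log_pos (by linarith [log_pos (show (1 : ℝ) < 3 by norm_num)])

lemma five_halves_le_const : 5 / 2 ≤ 2 / log (1 + log 3) := by
  have h3 : log 3 ≤ 1.1 := by
    rw [log_le_iff_le_exp (by norm_num), show (1.1 : ℝ) = 1 + 0.1 by norm_num, exp_add]
    have h1 := exp_one_gt_d9
    have h2 := quadratic_le_exp_of_nonneg (show (0 : ℝ) ≤ 0.1 by norm_num)
    norm_num at h1 h2 ⊢
    nlinarith
  have h : log (1 + log 3) ≤ 0.8 := by
    have h0 := log_pos (show (1 : ℝ) < 3 by norm_num)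
    rw [log_le_iff_le_exp (by linarith)]
    have h2 := quadratic_le_exp_of_nonneg (show (0 : ℝ) ≤ 0.8 by norm_num)
    norm_num at h2 h3 ⊢
    linarith
  rw [le_div_iff₀ log_one_add_log_three_pos]
  norm_num at h ⊢
  linarith

lemma log_combo_le {a b x y : ℝ} (ha : 0 ≤ a) (hb : 0 ≤ b) (hab : a + b = 1)
    (hx : 0 < x) (hy : 0 < y) : a * log x + b * log y ≤ log (a * x + b * y) := by
  simpa using strictConcaveOn_log_Ioi.concaveOn.2 (Set.mem_Ioi.2 hx) (Set.mem_Ioi.2 hy) ha hb hab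

/-- The case `φ ≤ tanh ((s - 1) / 2)`, where `log s` alone suffices on the right. -/
lemma endpoint_left {s φ M : ℝ} (hs : 1 ≤ s) (hM : 5 / 2 ≤ M)
    (hφ : φ ≤ (exp (s - 1) - 1) / (exp (s - 1) + 1)) :
    2 * φ / s + log s ≤ M * log s := by
  have hx : 1 ≤ exp (s - 1) := one_le_exp (by linarith)
  have h1 := le_log_one_add_of_nonneg (show 0 ≤ exp (s - 1) - 1 by linarith)
  rw [show 1 + (exp (s - 1) - 1) = exp (s - 1) by ring, log_exp,
    show exp (s - 1) - 1 + 2 = exp (s - 1) + 1 by ring, mul_div_assoc] at h1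
  have h2 : 2 * φ / s ≤ (s - 1) / s := by gcongr; linarith
  have h3 := one_sub_inv_le_log_of_pos (show 0 < s by linarith)
  have h4 : (s - 1) / s = 1 - s⁻¹ := by field_simp
  nlinarith [log_nonneg hs]

/-- The case `φ = 1`. For `s ≤ 2` the left side is at most `2`, its value at `s = 1`; for `s ≥ 2`
the bound `exp (s - 1) ≤ 2 + exp (s - 1)` already suffices. -/
lemma endpoint_right {s : ℝ} (hs : 1 ≤ s) :
    2 / s + log s ≤ 2 / log (1 + log 3) * log (1 + log (2 + exp (s - 1))) := by
  have hM := five_halves_le_const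
  have hx : 1 ≤ exp (s - 1) := one_le_exp (by linarith)
  have hs0 : 0 < s := by linarith
  rcases le_total s 2 with h | h
  · have h1 := log_le_sub_one_of_pos hs0
    have h2 : 2 / s + log s ≤ 2 := by
      have : 2 / s ≤ 2 - (s - 1) := by
        rw [div_le_iff₀ hs0]; nlinarith
      linarith
    have h3 : log (1 + log 3) ≤ log (1 + log (2 + exp (s - 1))) := by
      have := log_pos (show (1 : ℝ) < 3 by norm_num)
      gcongr
      linarith
    calc _ ≤ (2 : ℝ) := h2
      _ = 2 / log (1 + log 3) * log (1 + log 3) := by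
        field_simp [log_one_add_log_three_pos.ne']
      _ ≤ _ := by gcongr
  · have h1 : 2 / s ≤ 1 := by rw [div_le_one hs0]; exact h
    have h2 : log 2 ≤ log s := by gcongr
    have h3 : log s ≤ log (1 + log (2 + exp (s - 1))) := by
      have : s - 1 ≤ log (2 + exp (s - 1)) := by
        rw [le_log_iff_exp_le (by linarith)]; linarith
      gcongr
      linarith
    have h4 := log_two_gt_d9
    norm_num at h4
    nlinarith

lemma core_tau_one {s φ : ℝ} (hs : 1 ≤ s) (h0 : 0 ≤ φ) (h1 : φ ≤ 1) :
    2 * φ / s + log s ≤ 2 / log (1 + log 3) *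
      log (1 + log (1 + √((exp (s - 1) - 1) ^ 2 + 4 * φ ^ 2 * exp (s - 1)))) := by
  have hM := five_halves_le_const
  have hr := endpoint_right hs
  have hl := @endpoint_left s ((exp (s - 1) - 1) / (exp (s - 1) + 1)) _ hs hM le_rfl
  have hl' := @endpoint_left s φ _ hs hM
  have hx : 1 ≤ exp (s - 1) := one_le_exp (by linarith)
  have hlog : log (exp (s - 1)) = s - 1 := log_exp _
  set M := 2 / log (1 + log 3)
  generalize exp (s - 1) = x at *
  have hR1 : x - 1 ≤ √((x - 1) ^ 2 + 4 * φ ^ 2 * x) := by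
    apply le_sqrt_of_sq_le
    have : 0 ≤ 4 * φ ^ 2 * x := by positivity
    linarith
  have hR2 : φ * (x + 1) ≤ √((x - 1) ^ 2 + 4 * φ ^ 2 * x) := by
    apply le_sqrt_of_sq_le
    have : 0 ≤ (1 - φ ^ 2) * (x - 1) ^ 2 := mul_nonneg (by nlinarith) (sq_nonneg _)
    linarith
  generalize √((x - 1) ^ 2 + 4 * φ ^ 2 * x) = R at *
  rcases le_total φ ((x - 1) / (x + 1)) with h | h
  · refine (hl' h).trans ?_
    have : s - 1 ≤ log (1 + R) := by
      rw [← hlog]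
      gcongr
      linarith
    gcongr
    linarith
  · -- `φ = a * φ₀ + b * 1` as a convex combination
    rw [div_le_iff₀ (by linarith)] at h
    obtain ⟨a, ha⟩ : ∃ a, a = (1 - φ) * (x + 1) / 2 := ⟨_, rfl⟩
    obtain ⟨b, hb⟩ : ∃ b, b = 1 - a := ⟨_, rfl⟩
    have ha0 : 0 ≤ a := by rw [ha]; apply div_nonneg (mul_nonneg _ _) <;> linarith
    have hb0 : 0 ≤ b := by rw [hb, ha]; linarith
    have hab : a + b = 1 := by linarith
    have hφ : φ = a * ((x - 1) / (x + 1)) + b := by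
      rw [hb, ha]
      have : x + 1 ≠ 0 := by linarith
      field_simp
      ring
    have e1 : a * (s - 1) + b * log (2 + x) ≤ log (1 + R) := by
      rw [← hlog]
      refine (log_combo_le ha0 hb0 hab (by linarith) (by linarith)).trans ?_
      have e : a * x + b * (2 + x) = 1 + φ * (x + 1) := by rw [hb, ha]; ring
      rw [e]
      have : 0 ≤ φ * (x + 1) := mul_nonneg h0 (by linarith)
      gcongr
    have hy : 0 < 1 + log (2 + x) := by linarith [log_pos (show 1 < 2 + x by linarith)]
    have e2 : a * log s + b * log (1 + log (2 + x)) ≤ log (1 + log (1 + R)) := by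
      refine (log_combo_le ha0 hb0 hab (by linarith) hy).trans ?_
      apply log_le_log
      · nlinarith [log_pos (show 1 < 2 + x by linarith)]
      · linarith
    calc 2 * φ / s + log s
        = a * (2 * ((x - 1) / (x + 1)) / s + log s) + b * (2 / s + log s) := by
          rw [hb] at hφ ⊢
          linear_combination (2 / s) * hφ
      _ ≤ a * (M * log s) + b * (M * log (1 + log (2 + x))) := by gcongr
      _ = M * (a * log s + b * log (1 + log (2 + x))) := by ring
      _ ≤ _ := by gcongr

/-- For all `s ≥ 1`, `τ ≥ 1`, `φ ∈ [0,1]`: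
`2φ/(sτ) + log s ≤ M₀ · log(1 + log(1 + √((e^{(s−1)τ} − 1)² + 4φ²·e^{(s−1)τ})))`,
where `M₀ = 2/log(1 + log 3)`; moreover equality holds at `s = τ = φ = 1`. -/
theorem core_inequality :
    (∀ s τ φ : ℝ, 1 ≤ s → 1 ≤ τ → 0 ≤ φ → φ ≤ 1 →
      2 * φ / (s * τ) + Real.log s ≤
        (2 / Real.log (1 + Real.log 3)) *
          Real.log (1 + Real.log (1 + Real.sqrt
            ((Real.exp ((s - 1) * τ) - 1) ^ 2 +
              4 * φ ^ 2 * Real.exp ((s - 1) * τ)))))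
    ∧
    2 * (1:ℝ) / (1 * 1) + Real.log 1 =
      (2 / Real.log (1 + Real.log 3)) *
        Real.log (1 + Real.log (1 + Real.sqrt
          ((Real.exp (((1:ℝ) - 1) * 1) - 1) ^ 2 +
            4 * (1:ℝ) ^ 2 * Real.exp (((1:ℝ) - 1) * 1)))) := by
  constructor
  · intro s τ φ hs hτ h0 h1
    have hM := five_halves_le_const
    have hx : 1 ≤ exp (s - 1) := one_le_exp (by linarith)
    have hX : exp (s - 1) ≤ exp ((s - 1) * τ) := exp_le_exp.2 (by nlinarith)
    have hL : 2 * φ / (s * τ) ≤ 2 * φ / s := by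
      gcongr
      nlinarith
    refine (add_le_add_left hL _).trans ((core_tau_one hs h0 h1).trans ?_)
    have := log_nonneg (show 1 ≤ 1 + √((exp (s - 1) - 1) ^ 2 + 4 * φ ^ 2 * exp (s - 1)) by
      linarith [sqrt_nonneg ((exp (s - 1) - 1) ^ 2 + 4 * φ ^ 2 * exp (s - 1))])
    gcongr
  · have h : √(4 : ℝ) = 2 := by
      rw [show (4 : ℝ) = 2 ^ 2 by norm_num]
      exact sqrt_sq (by norm_num)
    have := log_one_add_log_three_pos.ne'
    norm_num [h]
    field_simp
end

section
/- Let n ≥ 2 and let S̄ⁿ = ℝⁿ ∪ {∞} be the one-point compactification of ℝⁿ. Let G ⊆ S̄ⁿ be a domain whose complement C = S̄ⁿ \ G contains at least two points, and let R ⊆ S̄ⁿ be a ring with complementary components E₁ and E₂. Then R separates C if and only if R separates ∂G (the boundary of G in S̄ⁿ). -/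
/-!
If `R` separates `Gᶜ`, then `R ⊆ G`. Each `Eᵢ` meets `Gᶜ`; if it also meets `G`, it meets `∂G` by
connectedness. Otherwise `Eᵢ ⊆ Gᶜ`, and since the space is connected, `Eᵢ` contains a point of
`closure R ⊆ closure G`, which lies on `∂G`.

Conversely, let `R` separate `∂G`. As `R` is connected and misses `∂G`, either `R ⊆ G`, which is the
claim, or `R` misses `closure G`. In the latter case the connected set `closure G` would be covered
by the disjoint closed sets `E₁`, `E₂` and meet both, which is impossible.
-/

open OnePoint

/-- A ring `R` with complementary components `E₁`, `E₂` separates a set `A` if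
`A ∩ R = ∅` and `A` meets both `E₁` and `E₂`. -/
def Separates {X : Type*} (R E₁ E₂ A : Set X) : Prop :=
  A ∩ R = ∅ ∧ (A ∩ E₁).Nonempty ∧ (A ∩ E₂).Nonempty

lemma inter_frontier_nonempty_of_isPreconnected {X : Type*} [TopologicalSpace X] {S T : Set X}
    (hS : IsPreconnected S) (h : (S ∩ T).Nonempty) (hc : (S ∩ Tᶜ).Nonempty) :
    (S ∩ frontier T).Nonempty := by
  rw [frontier_eq_closure_inter_closure]
  refine isPreconnected_closed_iff.mp hS _ _ isClosed_closure isClosed_closure ?_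
    (h.mono (Set.inter_subset_inter_right _ subset_closure))
    (hc.mono (Set.inter_subset_inter_right _ subset_closure))
  intro x _
  exact (em (x ∈ T)).imp (fun hx => subset_closure hx) (fun hx => subset_closure hx)

/-- In a connected space, each complementary piece of `R` contains a limit point of `R`: otherwise
that piece would be clopen. -/
lemma inter_closure_nonempty_of_union_eq_compl {X : Type*} [TopologicalSpace X]
    [PreconnectedSpace X] {R A B : Set X} (hA : A.Nonempty) (hB : B.Nonempty)
    (hAc : IsClosed A) (hBc : IsClosed B) (hdisj : Disjoint A B) (hunion : A ∪ B = Rᶜ) :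
    (A ∩ closure R).Nonempty := by
  obtain ⟨b, hb⟩ := hB
  have hAne : A ≠ Set.univ := fun h =>
    Set.disjoint_left.mp hdisj (h ▸ Set.mem_univ b) hb
  obtain ⟨x, hx⟩ := nonempty_frontier_iff.mpr ⟨hA, hAne⟩
  have hxA : x ∈ A := hAc.frontier_subset hx
  refine ⟨x, hxA, ?_⟩
  have hsub : Aᶜ ⊆ R ∪ B := by
    intro y hy
    by_contra hyRB
    rw [Set.mem_union, not_or] at hyRB
    have : y ∈ A ∪ B := hunion ▸ hyRB.1
    exact this.elim hy hyRB.2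
  have hxcl : x ∈ closure Aᶜ := by
    rw [frontier_eq_closure_inter_closure] at hx
    exact hx.2
  have := closure_mono hsub hxcl
  rw [closure_union, hBc.closure_eq] at this
  exact this.resolve_right (Set.disjoint_left.mp hdisj hxA)

lemma frontier_inter_nonempty_of_compl_inter {X : Type*} [TopologicalSpace X]
    [PreconnectedSpace X] {G R A B : Set X} (hG : IsOpen G) (hRG : R ⊆ G)
    (hA : IsConnected A) (hB : B.Nonempty)
    (hAc : IsClosed A) (hBc : IsClosed B) (hdisj : Disjoint A B) (hunion : A ∪ B = Rᶜ)
    (h : (Gᶜ ∩ A).Nonempty) : (frontier G ∩ A).Nonempty := by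
  rw [Set.inter_comm] at h ⊢
  by_cases hAG : (A ∩ G).Nonempty
  · exact inter_frontier_nonempty_of_isPreconnected hA.isPreconnected hAG h
  · obtain ⟨x, hxA, hxR⟩ :=
      inter_closure_nonempty_of_union_eq_compl hA.nonempty hB hAc hBc hdisj hunion
    refine ⟨x, hxA, ?_⟩
    rw [hG.frontier_eq]
    exact ⟨closure_mono hRG hxR, fun hxG => hAG ⟨x, hxA, hxG⟩⟩

/-- Let `G` be a domain in the Möbius space `S̄ⁿ = ℝⁿ ∪ {∞}` (`n ≥ 2`) whose
complement `C = S̄ⁿ \ G` contains at least two points, and let `R` be a ring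
with complementary components `E₁` and `E₂` (the two connected components of
`S̄ⁿ \ R`). Then `R` separates `C` if and only if `R` separates `∂G`. -/
theorem separates_compl_iff_separates_frontier {n : ℕ} (hn : 2 ≤ n)
    (G R E₁ E₂ : Set (OnePoint (EuclideanSpace ℝ (Fin n))))
    (hGopen : IsOpen G) (hGconn : IsConnected G) (hC : Gᶜ.Nontrivial)
    (hRopen : IsOpen R) (hRconn : IsConnected R)
    (hE₁ : IsConnected E₁) (hE₂ : IsConnected E₂)
    (hE₁c : IsClosed E₁) (hE₂c : IsClosed E₂)
    (hdisj : Disjoint E₁ E₂) (hunion : E₁ ∪ E₂ = Rᶜ) :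
    Separates R E₁ E₂ Gᶜ ↔ Separates R E₁ E₂ (frontier G) := by
  -- `ℝⁿ` is noncompact for `n ≥ 1`, which makes its one-point compactification connected.
  have : Nonempty (Fin n) := ⟨⟨0, by omega⟩⟩
  have : NoncompactSpace (EuclideanSpace ℝ (Fin n)) := NormedSpace.noncompactSpace ℝ _
  have hfr : frontier G ⊆ Gᶜ := by
    rw [hGopen.frontier_eq]
    exact fun x hx => hx.2
  constructor
  · rintro ⟨h0, h1, h2⟩
    have hRG : R ⊆ G := fun x hx => by
      by_contra hxG
      exact (Set.eq_empty_iff_forall_notMem.mp h0 x) ⟨hxG, hx⟩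
    refine ⟨Set.subset_eq_empty (Set.inter_subset_inter_left R hfr) h0, ?_, ?_⟩
    · exact frontier_inter_nonempty_of_compl_inter hGopen hRG hE₁ hE₂.nonempty hE₁c hE₂c
        hdisj hunion h1
    · exact frontier_inter_nonempty_of_compl_inter hGopen hRG hE₂ hE₁.nonempty hE₂c hE₁c
        hdisj.symm (by rw [Set.union_comm, hunion]) h2
  · rintro ⟨h0, h1, h2⟩
    refine ⟨?_, h1.mono (Set.inter_subset_inter_left _ hfr),
      h2.mono (Set.inter_subset_inter_left _ hfr)⟩
    by_contra hne
    have hRC : (R ∩ Gᶜ).Nonempty := by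
      rw [Set.inter_comm]
      exact Set.nonempty_iff_ne_empty.mpr hne
    have hRG : Disjoint G R := by
      rw [Set.disjoint_iff_inter_eq_empty]
      by_contra hGR
      have hRG' : (R ∩ G).Nonempty := by
        rw [Set.inter_comm]
        exact Set.nonempty_iff_ne_empty.mpr hGR
      obtain ⟨x, hxR, hxF⟩ := inter_frontier_nonempty_of_isPreconnected hRconn.isPreconnected hRG' hRC
      exact Set.eq_empty_iff_forall_notMem.mp h0 x ⟨hxF, hxR⟩
    have hcov : closure G ⊆ E₁ ∪ E₂ := by
      rw [hunion]
      exact (hRG.closure_left hRopen).subset_compl_right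
    obtain ⟨x, -, hx1, hx2⟩ := isPreconnected_closed_iff.mp hGconn.isPreconnected.closure
      E₁ E₂ hE₁c hE₂c hcov
      (h1.mono (Set.inter_subset_inter_left _ frontier_subset_closure))
      (h2.mono (Set.inter_subset_inter_left _ frontier_subset_closure))
    exact Set.disjoint_left.mp hdisj hx1 hx2
end

section
/- Let n ≥ 2 and let S̄ⁿ = ℝⁿ ∪ {∞} be the one-point compactification of ℝⁿ. Let G ⊆ S̄ⁿ be a domain whose complement C = S̄ⁿ \ G contains at least two points. Then the boundary ∂G (taken in S̄ⁿ) is uniformly perfect if and only if C is uniformly perfect. -/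
open OnePoint

/-!
Write `C = Gᶜ`; since `G` is open, `∂G = C ∩ closure G ⊆ C`.

*If `∂G` is uniformly perfect with constant `c`, then `C` is so with constant `c / 4`.* Suppose `C`
misses the annulus `c/4 · r ≤ |x - a| ≤ r` about `a ∈ C`, so that the annulus lies in `G`. The ball
of radius `c/4 · r` about `a` is connected and meets both `C` and `G`, so it contains some `b ∈ ∂G`.
If `∞ ∉ ∂G`, then `C` also has a finite point outside the ball of radius `r` (`exists_far_mem`), and
the ray through it yields `d ∈ ∂G` with `|d - a| ≥ r`. Hence `diam ∂G > r / 2` in every case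
(`half_lt_mobiusDiam_frontier`), and a point of `∂G` at distance between `c · r/2` and `r/2` from `b`
lies in the annulus about `a`.

*If `C` is uniformly perfect with constant `c`, then `∂G` is so with constant `c / 2`.* Let `a ∈ ∂G`
and take `x ∈ C` with `c · r/2 ≤ |x - a| ≤ r/2`. If the sphere about `a` through `x` misses `∂G`, it
lies in `C`, because spheres are connected for `n ≥ 2`. Then this sphere separates the connected set
`G`, which accumulates at `a`, from the outside, so `∂G` lies in the closed ball bounded by the
sphere and `diam ∂G ≤ r`.
-/

open scoped Classical in
/-- The diameter of a subset `E` of the Möbius space `S̄ⁿ = ℝⁿ ∪ {∞}`: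
the Euclidean diameter of `E ∩ ℝⁿ`, and `+∞` when `∞ ∈ E`. -/
noncomputable def mobiusDiam {n : ℕ} (E : Set (OnePoint (EuclideanSpace ℝ (Fin n)))) :
    ENNReal :=
  if (∞ : OnePoint (EuclideanSpace ℝ (Fin n))) ∈ E then ⊤
  else EMetric.diam {x : EuclideanSpace ℝ (Fin n) | (x : OnePoint (EuclideanSpace ℝ (Fin n))) ∈ E}

/-- A set `E ⊆ S̄ⁿ` with at least two points is uniformly perfect if there is a
constant `c ∈ (0,1)` such that `E` meets the closed annulus
`{x ∈ ℝⁿ : c·r ≤ |x−a| ≤ r}` for every finite `a ∈ E` and every `r ∈ (0, diam E)`. -/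
def MobiusUniformlyPerfect {n : ℕ} (E : Set (OnePoint (EuclideanSpace ℝ (Fin n)))) : Prop :=
  ∃ c : ℝ, 0 < c ∧ c < 1 ∧
    ∀ a : EuclideanSpace ℝ (Fin n), (a : OnePoint (EuclideanSpace ℝ (Fin n))) ∈ E →
      ∀ r : ℝ, 0 < r → ENNReal.ofReal r < mobiusDiam E →
        ∃ x : EuclideanSpace ℝ (Fin n),
          (x : OnePoint (EuclideanSpace ℝ (Fin n))) ∈ E ∧
          c * r ≤ ‖x - a‖ ∧ ‖x - a‖ ≤ r

/-- A preconnected set meeting an open set and its complement meets the frontier. -/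
lemma exists_mem_frontier_of_isPreconnected {X : Type*} [TopologicalSpace X] {G T : Set X}
    (hG : IsOpen G) (hT : IsPreconnected T) {x y : X} (hx : x ∈ T) (hxG : x ∈ G)
    (hy : y ∈ T) (hyG : y ∉ G) : ∃ z ∈ T, z ∈ frontier G := by
  by_contra! h
  have hsub : T ⊆ G := by
    refine IsPreconnected.subset_left_of_subset_union hG (isClosed_closure (s := G)).isOpen_compl
      (Set.disjoint_compl_right_iff_subset.2 subset_closure) ?_ ⟨x, hx, hxG⟩ hT
    intro z hz
    by_cases hzG : z ∈ G
    · exact Or.inl hzG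
    · refine Or.inr fun hzc => h z hz ?_
      rw [hG.frontier_eq]
      exact ⟨hzc, hzG⟩
  exact hyG (hsub hy)

/-- The version of `exists_mem_frontier_of_isPreconnected` for subsets of the finite part of
`OnePoint X`. -/
lemma exists_coe_mem_frontier {X : Type*} [TopologicalSpace X] {G : Set (OnePoint X)} {T : Set X}
    (hG : IsOpen G) (hT : IsPreconnected T) {x y : X} (hx : x ∈ T) (hxG : (x : OnePoint X) ∈ G)
    (hy : y ∈ T) (hyG : (y : OnePoint X) ∉ G) : ∃ z ∈ T, (z : OnePoint X) ∈ frontier G := by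
  obtain ⟨_, ⟨z, hz, rfl⟩, hzG⟩ := exists_mem_frontier_of_isPreconnected hG
    (hT.image _ continuous_coe.continuousOn) (Set.mem_image_of_mem _ hx) hxG
    (Set.mem_image_of_mem _ hy) hyG
  exact ⟨z, hz, hzG⟩

lemma mobiusDiam_mono {n : ℕ} {E F : Set (OnePoint (EuclideanSpace ℝ (Fin n)))} (h : E ⊆ F) :
    mobiusDiam E ≤ mobiusDiam F := by
  unfold mobiusDiam
  split_ifs with h1 h2
  · exact le_rfl
  · exact absurd (h h1) h2
  · exact le_top
  · exact Metric.ediam_mono fun x hx => h hx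

lemma ofReal_dist_le_mobiusDiam {n : ℕ} {E : Set (OnePoint (EuclideanSpace ℝ (Fin n)))}
    {x y : EuclideanSpace ℝ (Fin n)} (hx : (x : OnePoint (EuclideanSpace ℝ (Fin n))) ∈ E)
    (hy : (y : OnePoint (EuclideanSpace ℝ (Fin n))) ∈ E) :
    ENNReal.ofReal ‖x - y‖ ≤ mobiusDiam E := by
  rw [← dist_eq_norm, ← edist_dist]
  unfold mobiusDiam
  split_ifs with h1
  · exact le_top
  · exact Metric.edist_le_ediam_of_mem hx hy

lemma mobiusDiam_le_of_subset_closedBall {n : ℕ}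
    {E : Set (OnePoint (EuclideanSpace ℝ (Fin n)))} {a : EuclideanSpace ℝ (Fin n)} {ρ : ℝ}
    (h : E ⊆ (↑) '' Metric.closedBall a ρ) : mobiusDiam E ≤ ENNReal.ofReal (2 * ρ) := by
  have hinf : ∞ ∉ E := fun hE => by
    obtain ⟨y, -, hy⟩ := h hE
    exact coe_ne_infty y hy
  unfold mobiusDiam
  rw [if_neg hinf]
  refine Metric.ediam_le fun x hx y hy => ?_
  have key : ∀ z : EuclideanSpace ℝ (Fin n),
      (z : OnePoint (EuclideanSpace ℝ (Fin n))) ∈ E → dist z a ≤ ρ := fun z hz => by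
    obtain ⟨w, hw, hwz⟩ := h hz
    rw [← coe_injective hwz]
    exact hw
  rw [edist_dist]
  apply ENNReal.ofReal_le_ofReal
  have h1 := key x hx
  have h2 := key y hy
  linarith [dist_triangle_right x y a]

/-- If `C = Gᶜ` misses the annulus `δ r ≤ |x - a| ≤ r` with `δ ≤ 1/2` although `r < diam C`, and
`∞ ∉ ∂G`, then `C` has a finite point beyond the annulus. For `∞ ∉ C` this comes from the diameter;
for `∞ ∈ C` the point `∞` is interior to `C`. -/
lemma exists_far_mem {n : ℕ} (hn : 2 ≤ n) {G : Set (OnePoint (EuclideanSpace ℝ (Fin n)))}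
    (hG : IsOpen G) (hinf : ∞ ∉ frontier G) {a : EuclideanSpace ℝ (Fin n)} {r δ : ℝ} (hr : 0 < r)
    (hδ : δ ≤ 1 / 2) (hdiam : ENNReal.ofReal r < mobiusDiam Gᶜ)
    (hno : ∀ x : EuclideanSpace ℝ (Fin n), (x : OnePoint (EuclideanSpace ℝ (Fin n))) ∈ Gᶜ →
      δ * r ≤ ‖x - a‖ → r < ‖x - a‖) :
    ∃ p : EuclideanSpace ℝ (Fin n), (p : OnePoint (EuclideanSpace ℝ (Fin n))) ∈ Gᶜ ∧
      r < ‖p - a‖ := by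
  by_cases hC : ∞ ∈ Gᶜ
  · have : Nonempty (Fin n) := ⟨⟨0, by omega⟩⟩
    have hnhds : (closure G)ᶜ ∈ nhds (∞ : OnePoint (EuclideanSpace ℝ (Fin n))) := by
      refine isClosed_closure.isOpen_compl.mem_nhds fun hcl => hinf ?_
      rw [hG.frontier_eq]
      exact ⟨hcl, hC⟩
    have h1 := tendsto_coe_infty.eventually hnhds
    rw [Filter.coclosedCompact_eq_cocompact] at h1
    have h2 := (tendsto_dist_right_cocompact_atTop a).eventually_gt_atTop r
    obtain ⟨p, hp1, hp2⟩ := (h1.and h2).exists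
    refine ⟨p, fun hpG => hp1 (subset_closure hpG), ?_⟩
    rwa [← dist_eq_norm]
  · by_contra! hnear
    -- every point of `C` lies within `δ r ≤ r / 2` of `a`
    refine absurd hdiam (not_lt.2 ?_)
    have hsub : Gᶜ ⊆ (↑) '' Metric.closedBall a (r / 2) := by
      intro z hz
      induction z using OnePoint.rec with
      | infty => exact absurd hz hC
      | coe z =>
        refine ⟨z, ?_, rfl⟩
        rw [Metric.mem_closedBall, dist_eq_norm]
        by_contra! hlt
        have := hno z hz (by nlinarith)
        exact absurd (hnear z hz) (not_le.2 this)
    have := mobiusDiam_le_of_subset_closedBall hsub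
    rwa [mul_div_cancel₀ r two_ne_zero] at this

/-- A frontier point `b` close to the centre `a` of an annulus inside `G`, together with `∞` or a
frontier point beyond the annulus, bounds the diameter of `∂G` from below. -/
lemma half_lt_mobiusDiam_frontier {n : ℕ} (hn : 2 ≤ n)
    {G : Set (OnePoint (EuclideanSpace ℝ (Fin n)))} (hG : IsOpen G)
    {a b : EuclideanSpace ℝ (Fin n)} {r δ : ℝ} (hr : 0 < r) (hδ : δ < 1 / 2)
    (hdiam : ENNReal.ofReal r < mobiusDiam Gᶜ)
    (hno : ∀ x : EuclideanSpace ℝ (Fin n), (x : OnePoint (EuclideanSpace ℝ (Fin n))) ∈ Gᶜ →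
      δ * r ≤ ‖x - a‖ → r < ‖x - a‖)
    (hb : (b : OnePoint (EuclideanSpace ℝ (Fin n))) ∈ frontier G) (hba : ‖b - a‖ ≤ δ * r) :
    ENNReal.ofReal (r / 2) < mobiusDiam (frontier G) := by
  by_cases hinf : ∞ ∈ frontier G
  · unfold mobiusDiam
    rw [if_pos hinf]
    exact ENNReal.ofReal_lt_top
  obtain ⟨p, hpC, hp⟩ := exists_far_mem hn hG hinf hr hδ.le hdiam hno
  have hp0 : 0 < ‖p - a‖ := hr.trans hp
  -- the part beyond radius `r` of the ray from `a` through `p`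
  have hray : IsPreconnected ((fun t : ℝ => a + t • (p - a)) '' Set.Ici (r / ‖p - a‖)) :=
    isPreconnected_Ici.image _ (by fun_prop)
  have hstart : ((a + (r / ‖p - a‖) • (p - a) : EuclideanSpace ℝ (Fin n)) :
      OnePoint (EuclideanSpace ℝ (Fin n))) ∈ G := by
    have hnorm : ‖a + (r / ‖p - a‖) • (p - a) - a‖ = r := by
      rw [add_sub_cancel_left, norm_smul, Real.norm_of_nonneg (by positivity)]
      field_simp
    by_contra hC
    have := hno _ hC (by rw [hnorm]; nlinarith)
    exact absurd hnorm this.ne'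
  have hend : p ∈ (fun t : ℝ => a + t • (p - a)) '' Set.Ici (r / ‖p - a‖) :=
    ⟨1, (div_le_one hp0).2 hp.le, by simp⟩
  obtain ⟨_, ⟨t, ht, rfl⟩, hd⟩ := exists_coe_mem_frontier hG hray
    (Set.mem_image_of_mem _ Set.self_mem_Ici) hstart
    hend hpC
  have hda : r ≤ ‖a + t • (p - a) - a‖ := by
    rw [add_sub_cancel_left, norm_smul]
    exact ((div_le_iff₀ hp0).1 ht).trans (by gcongr; exact Real.le_norm_self t)
  refine lt_of_lt_of_le ?_ (ofReal_dist_le_mobiusDiam hd hb)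
  have htri := norm_sub_le_norm_sub_add_norm_sub (a + t • (p - a)) b a
  rw [ENNReal.ofReal_lt_ofReal_iff']
  constructor <;> nlinarith

lemma uniformlyPerfect_compl_of_frontier {n : ℕ} (hn : 2 ≤ n)
    {G : Set (OnePoint (EuclideanSpace ℝ (Fin n)))} (hG : IsOpen G)
    (h : MobiusUniformlyPerfect (frontier G)) : MobiusUniformlyPerfect Gᶜ := by
  obtain ⟨c, hc0, hc1, h⟩ := h
  refine ⟨c / 4, by linarith, by linarith, fun a ha r hr hdiam => ?_⟩
  by_contra! hno
  have : Nonempty (Fin n) := ⟨⟨0, by omega⟩⟩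
  have hδr : 0 < c / 4 * r := by positivity
  obtain ⟨y, hy⟩ := (NormedSpace.sphere_nonempty (x := a)).2 hδr.le
  have hya : ‖y - a‖ = c / 4 * r := by rwa [← dist_eq_norm]
  have hyG : (y : OnePoint (EuclideanSpace ℝ (Fin n))) ∈ G := by
    by_contra hC
    have := hno y hC hya.ge
    nlinarith
  obtain ⟨b, hb, hbG⟩ := exists_coe_mem_frontier hG
    (convex_closedBall a (c / 4 * r)).isPreconnected
    (Metric.sphere_subset_closedBall hy) hyG (Metric.mem_closedBall_self hδr.le) ha
  rw [Metric.mem_closedBall, dist_eq_norm] at hb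
  have hhalf := half_lt_mobiusDiam_frontier hn hG hr (by linarith) hdiam hno hbG hb
  obtain ⟨x, hxG, hx1, hx2⟩ := h b hbG (r / 2) (by positivity) hhalf
  have hxC : (x : OnePoint (EuclideanSpace ℝ (Fin n))) ∈ Gᶜ := by
    rw [hG.frontier_eq] at hxG
    exact hxG.2
  have t1 := norm_sub_le_norm_sub_add_norm_sub x b a
  have t2 := norm_sub_le_norm_sub_add_norm_sub x a b
  rw [norm_sub_rev a b] at t2
  have := hno x hxC (by nlinarith)
  nlinarith

lemma uniformlyPerfect_frontier_of_compl {n : ℕ} (hn : 2 ≤ n)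
    {G : Set (OnePoint (EuclideanSpace ℝ (Fin n)))} (hG : IsOpen G) (hGconn : IsPreconnected G)
    (h : MobiusUniformlyPerfect Gᶜ) : MobiusUniformlyPerfect (frontier G) := by
  obtain ⟨c, hc0, hc1, h⟩ := h
  have hsub : frontier G ⊆ Gᶜ := by
    rw [hG.frontier_eq]
    exact fun x hx => hx.2
  refine ⟨c / 2, by linarith, by linarith, fun a ha r hr hdiam => ?_⟩
  obtain ⟨x, hxC, hx1, hx2⟩ := h a (hsub ha) (r / 2) (by positivity)
    ((ENNReal.ofReal_le_ofReal (by linarith)).trans_lt (hdiam.trans_le (mobiusDiam_mono hsub)))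
  by_contra! hno
  have hρ : 0 < ‖x - a‖ := lt_of_lt_of_le (by positivity) hx1
  have hrank : 1 < Module.rank ℝ (EuclideanSpace ℝ (Fin n)) := by
    rw [← Module.finrank_eq_rank, finrank_euclideanSpace_fin]
    exact_mod_cast hn
  have hsphere : ∀ y ∈ Metric.sphere a ‖x - a‖,
      (y : OnePoint (EuclideanSpace ℝ (Fin n))) ∉ G := by
    intro y hy hyG
    obtain ⟨z, hz, hzG⟩ := exists_coe_mem_frontier hG (isPreconnected_sphere hrank a ‖x - a‖)
      hy hyG (mem_sphere_iff_norm.2 rfl : x ∈ _) hxC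
    rw [mem_sphere_iff_norm] at hz
    have := hno z hzG (by rw [hz]; linarith)
    linarith
  have hball : G ⊆ (↑) '' Metric.ball a ‖x - a‖ := by
    have hopen : IsOpen ((↑) '' Metric.ball a ‖x - a‖ :
        Set (OnePoint (EuclideanSpace ℝ (Fin n)))) := isOpen_image_coe.2 Metric.isOpen_ball
    refine IsPreconnected.subset_left_of_subset_union hopen
      (isOpen_compl_image_coe.2 ⟨Metric.isClosed_closedBall, isCompact_closedBall a ‖x - a‖⟩)
      (Set.disjoint_compl_right_iff_subset.2 (Set.image_mono Metric.ball_subset_closedBall))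
      ?_ ?_ hGconn
    · intro z hz
      by_cases hz' : z ∈ ((↑) '' Metric.closedBall a ‖x - a‖ :
        Set (OnePoint (EuclideanSpace ℝ (Fin n))))
      · obtain ⟨y, hy, rfl⟩ := hz'
        refine Or.inl ⟨y, ?_, rfl⟩
        exact lt_of_le_of_ne hy fun heq => hsphere y heq hz
      · exact Or.inr hz'
    · rw [Set.inter_comm]
      exact mem_closure_iff.1 (frontier_subset_closure ha) _ hopen
        ⟨a, Metric.mem_ball_self hρ, rfl⟩
  have hclosed : frontier G ⊆ (↑) '' Metric.closedBall a ‖x - a‖ :=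
    frontier_subset_closure.trans (closure_minimal
      (hball.trans (Set.image_mono Metric.ball_subset_closedBall))
      (isClosed_image_coe.2 ⟨Metric.isClosed_closedBall, isCompact_closedBall a ‖x - a‖⟩))
  refine absurd hdiam (not_lt.2 ((mobiusDiam_le_of_subset_closedBall hclosed).trans ?_))
  exact ENNReal.ofReal_le_ofReal (by linarith)

/-- Let `G` be a domain in the Möbius space `S̄ⁿ = ℝⁿ ∪ {∞}` (`n ≥ 2`) whose
complement `C = S̄ⁿ \ G` contains at least two points. Then the boundary `∂G`
is uniformly perfect if and only if `C` is uniformly perfect. -/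
theorem frontier_uniformlyPerfect_iff_compl {n : ℕ} (hn : 2 ≤ n)
    (G : Set (OnePoint (EuclideanSpace ℝ (Fin n))))
    (hGopen : IsOpen G) (hGconn : IsConnected G) (hC : Gᶜ.Nontrivial) :
    MobiusUniformlyPerfect (frontier G) ↔ MobiusUniformlyPerfect Gᶜ := by
  exact ⟨uniformlyPerfect_compl_of_frontier hn hGopen,
    uniformlyPerfect_frontier_of_compl hn hGopen hGconn.isPreconnected⟩
end

section
/- Let n ≥ 2 and let (s_k)_{k≥1} and (r_k)_{k≥1} be sequences of positive real numbers decreasing to 0 satisfying α_k := s_k − r_k − (s_{k+1} + r_{k+1}) > 0 for all k ≥ 1, and set r'_k = r_k + min(α_{k−1}, α_k) for k ≥ 2. Let e₁ be a unit vector in ℝⁿ and C = {0} ∪ ⋃_{k≥1} B̄ⁿ(s_k e₁, r_k), where B̄ⁿ(x, r) is the closed ball of center x and radius r. If limsup_{k→∞} r'_k/r_k = +∞, then the compact set C is not uniformly perfect: for every c ∈ (0,1) there exist a ∈ C and r ∈ (0, diam(C)) such that C ∩ {x ∈ ℝⁿ : c·r ≤ |x−a| ≤ r} = ∅. -/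
open Metric

/-!
For `c ∈ (0,1)` choose `k` with `r'_k > r_k / c` and any `ρ` strictly between `r_k / c` and `r'_k`.
Around the centre `a = s_k e₁`, the ball number `k` lies at distance at most `r_k < c ρ`, while the
rest of `C` lies at distance at least `r'_k > ρ`: this is the gap `r_k < |x - a| < r'_k` around the
`k`-th ball. Finally `ρ < r'_k ≤ s_k = |0 - a| ≤ diam C`, since `0, a ∈ C`.
-/

/-- Martio–Sarvas type example: let `(s_k)`, `(r_k)` (`k ≥ 1`) be sequences of
positive numbers decreasing to `0` with
`α_k := s_k − r_k − (s_{k+1} + r_{k+1}) > 0`, let `e₁` be a unit vector and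
`C = {0} ∪ ⋃_{k ≥ 1} B̄ⁿ(s_k e₁, r_k)`. If `limsup r'_k / r_k = +∞`, where
`r'_k = r_k + min(α_{k−1}, α_k)`, then `C` is not uniformly perfect: for every
`c ∈ (0,1)` there exist `a ∈ C` and `ρ ∈ (0, diam C)` such that the closed
annulus `{x : c·ρ ≤ |x−a| ≤ ρ}` misses `C`. -/
theorem not_uniformly_perfect_example {n : ℕ} (hn : 2 ≤ n)
    (e₁ : EuclideanSpace ℝ (Fin n)) (he₁ : ‖e₁‖ = 1)
    (s r : ℕ → ℝ)
    (hspos : ∀ k, 1 ≤ k → 0 < s k) (hrpos : ∀ k, 1 ≤ k → 0 < r k)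
    (hsdec : ∀ k, 1 ≤ k → s (k + 1) ≤ s k) (hrdec : ∀ k, 1 ≤ k → r (k + 1) ≤ r k)
    (hslim : Filter.Tendsto s Filter.atTop (nhds 0))
    (hrlim : Filter.Tendsto r Filter.atTop (nhds 0))
    (halpha : ∀ k, 1 ≤ k → 0 < s k - r k - (s (k + 1) + r (k + 1)))
    (C : Set (EuclideanSpace ℝ (Fin n)))
    (hC : C = {0} ∪ ⋃ k ∈ {k : ℕ | 1 ≤ k}, Metric.closedBall (s k • e₁) (r k))
    -- `limsup_{k→∞} r'_k / r_k = +∞`, where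
    -- `r'_k = r_k + min(α_{k−1}, α_k)` and `α_k = s_k − r_k − (s_{k+1} + r_{k+1})`:
    (hlimsup : ∀ M : ℝ, ∃ k, 2 ≤ k ∧ M <
      (r k + min (s (k - 1) - r (k - 1) - (s k + r k))
                 (s k - r k - (s (k + 1) + r (k + 1)))) / r k) :
    ∀ c : ℝ, 0 < c → c < 1 →
      ∃ a ∈ C, ∃ ρ : ℝ, 0 < ρ ∧ ρ < Metric.diam C ∧
        {x ∈ C | c * ρ ≤ ‖x - a‖ ∧ ‖x - a‖ ≤ ρ} = ∅ := by
  intro c hc0 hc1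
  have hs_anti : ∀ i, 1 ≤ i → ∀ j, i ≤ j → s j ≤ s i := by
    intro i hi j hij
    induction j, hij using Nat.le_induction with
    | base => exact le_rfl
    | succ j hij ih => exact (hsdec j (hi.trans hij)).trans ih
  have hr_anti : ∀ i, 1 ≤ i → ∀ j, i ≤ j → r j ≤ r i := by
    intro i hi j hij
    induction j, hij using Nat.le_induction with
    | base => exact le_rfl
    | succ j hij ih => exact (hrdec j (hi.trans hij)).trans ih
  -- the left endpoints of the intervals cut out on the axis also decrease
  have hleft_anti : ∀ i, 1 ≤ i → ∀ j, i ≤ j → s j - r j ≤ s i - r i := by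
    intro i hi j hij
    induction j, hij using Nat.le_induction with
    | base => exact le_rfl
    | succ j hij ih =>
      have h1 := halpha j (hi.trans hij)
      have h2 := hrpos (j + 1) (by omega)
      linarith
  have hdist : ∀ i j, dist (s i • e₁) (s j • e₁) = |s i - s j| := by
    intro i j
    rw [dist_eq_norm, ← sub_smul, norm_smul, he₁, mul_one, Real.norm_eq_abs]
  have hnorm : ∀ i, 1 ≤ i → ‖s i • e₁‖ = s i := by
    intro i hi
    rw [norm_smul, he₁, mul_one, Real.norm_eq_abs, abs_of_pos (hspos i hi)]
  have hmem : ∀ x, x ∈ C ↔ x = 0 ∨ ∃ j, 1 ≤ j ∧ dist x (s j • e₁) ≤ r j := by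
    intro x
    simp [hC]
  have hbdd : Bornology.IsBounded C := by
    refine (Metric.isBounded_closedBall (x := (0 : EuclideanSpace ℝ (Fin n)))
      (r := s 1 + r 1)).subset ?_
    intro x hx
    rw [mem_closedBall, dist_zero_right]
    rcases (hmem x).1 hx with rfl | ⟨j, hj, hxj⟩
    · rw [norm_zero]
      linarith [hspos 1 le_rfl, hrpos 1 le_rfl]
    · have h1 := dist_triangle x (s j • e₁) 0
      rw [dist_zero_right, dist_zero_right, hnorm j hj] at h1
      linarith [hs_anti 1 le_rfl j hj, hr_anti 1 le_rfl j hj]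
  obtain ⟨k, hk2, hk⟩ := hlimsup (1 / c)
  have hk1 : 1 ≤ k := by omega
  have hrk := hrpos k hk1
  rw [lt_div_iff₀ hrk, one_div_mul_eq_div] at hk
  obtain ⟨ρ, hρ1, hρ2⟩ := exists_between hk
  have hcρ : r k < c * ρ := by rwa [div_lt_iff₀' hc0] at hρ1
  have hρ0 : 0 < ρ := (div_pos hrk hc0).trans hρ1
  have hρl : ρ < s k - (s (k + 1) + r (k + 1)) := by
    have := min_le_right (s (k - 1) - r (k - 1) - (s k + r k))
      (s k - r k - (s (k + 1) + r (k + 1)))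
    linarith
  have hρr : ρ < s (k - 1) - r (k - 1) - s k := by
    have := min_le_left (s (k - 1) - r (k - 1) - (s k + r k))
      (s k - r k - (s (k + 1) + r (k + 1)))
    linarith
  have hρs : ρ < s k := by linarith [hspos (k + 1) (by omega), hrpos (k + 1) (by omega)]
  have ha : s k • e₁ ∈ C := (hmem _).2 (Or.inr ⟨k, hk1, by rw [dist_self]; exact hrk.le⟩)
  refine ⟨s k • e₁, ha, ρ, hρ0, ?_, ?_⟩
  · have h := dist_le_diam_of_mem hbdd ha ((hmem 0).2 (Or.inl rfl))
    rw [dist_zero_right, hnorm k hk1] at h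
    exact hρs.trans_le h
  · refine Set.eq_empty_iff_forall_notMem.2 ?_
    rintro x ⟨hx, hx1, hx2⟩
    rw [← dist_eq_norm] at hx1 hx2
    rcases (hmem x).1 hx with rfl | ⟨j, hj, hxj⟩
    · rw [dist_zero_left, hnorm k hk1] at hx2
      linarith
    · have htri := dist_triangle_left (s j • e₁) (s k • e₁) x
      rw [hdist] at htri
      rcases lt_trichotomy j k with hjk | rfl | hjk
      · have h1 := hleft_anti j hj (k - 1) (by omega)
        linarith [le_abs_self (s j - s k)]
      · linarith
      · have h1 := hs_anti (k + 1) (by omega) j hjk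
        have h2 := hr_anti (k + 1) (by omega) j hjk
        linarith [neg_abs_le (s j - s k)]
end
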